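/- arXiv:1807.01272 — 10 statements merged into one kernel-verified Lean document; each statement's English description precedes it below -/
import Mathlib

section
/- Let F be a field, let A be an m×n matrix over F[x], and let r be a natural number such that the rank of A (as a matrix over the fraction field F(x)) is at least r. Then the set of points α ∈ F for which the evaluated matrix A(α) over F has rank strictly less than r is finite and has cardinality at most r·deg(A). -/
open Polynomial Matrix

noncomputable section

variable {F : Type*} [Field F]

/-- Entrywise evaluation of a polynomial matrix at a point of `F`. -/
def matEval {m n : ℕ} (A : Matrix (Fin m) (Fin n) (Polynomial F)) (α : F) :
    Matrix (Fin m) (Fin n) F :=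
  A.map (Polynomial.eval α)

/-- `deg A`: the maximum of the degrees of the entries of `A`. -/
def matDeg {m n : ℕ} (A : Matrix (Fin m) (Fin n) (Polynomial F)) : ℕ :=
  Finset.univ.sup fun p : Fin m × Fin n => (A p.1 p.2).natDegree

/-- The rank of a polynomial matrix, i.e. its rank as a matrix over the
fraction field `F(x)` (represented by `RatFunc F`). -/
def polyRank {m n : ℕ} (A : Matrix (Fin m) (Fin n) (Polynomial F)) : ℕ :=
  (A.map (algebraMap (Polynomial F) (RatFunc F))).rank

theorem aux_rows {K : Type*} [Field K] {m n r : ℕ} (B : Matrix (Fin m) (Fin n) K)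
    (h : r ≤ B.rank) : ∃ f : Fin r → Fin m, (B.submatrix f id).rank = r := by
  rw [rank_eq_finrank_span_row] at h
  obtain ⟨κ, a, ha, hs, hl⟩ := exists_linearIndependent' K B.row
  haveI : Finite κ := Finite.of_injective a ha
  haveI := Fintype.ofFinite κ
  have hc : r ≤ Fintype.card κ := by
    rw [← hs, finrank_span_eq_card hl] at h
    exact h
  obtain ⟨e⟩ : Nonempty (Fin r ↪ κ) :=
    Function.Embedding.nonempty_of_card_le (by simpa using hc)
  refine ⟨a ∘ e, ?_⟩
  have h2 : LinearIndependent K (B.submatrix (a ∘ e) id).row := hl.comp e e.injective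
  simpa using h2.rank_matrix

theorem aux_minor {K : Type*} [Field K] {m n r : ℕ} (B : Matrix (Fin m) (Fin n) K)
    (h : r ≤ B.rank) : ∃ (f : Fin r → Fin m) (g : Fin r → Fin n),
      (B.submatrix f g).det ≠ 0 := by
  obtain ⟨f, hf⟩ := aux_rows B h
  obtain ⟨g, hg⟩ := aux_rows (B.submatrix f id)ᵀ (by rw [rank_transpose, hf])
  refine ⟨f, g, ?_⟩
  have h1 : (B.submatrix f g).rank = r := by
    rw [← rank_transpose]; exact hg
  have h2 : LinearIndependent K (B.submatrix f g).row := by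
    rw [linearIndependent_iff_card_eq_finrank_span, Set.finrank, ← rank_eq_finrank_span_row, h1]
    simp
  have := (Matrix.linearIndependent_rows_iff_isUnit).1 h2
  exact ((Matrix.isUnit_iff_isUnit_det _).1 this).ne_zero

theorem rank_eval_drop_finite {m n r : ℕ}
    (A : Matrix (Fin m) (Fin n) (Polynomial F))
    (hr : r ≤ polyRank A) :
    {α : F | (matEval A α).rank < r}.Finite ∧
      {α : F | (matEval A α).rank < r}.ncard ≤ r * matDeg A := by
  classical
  obtain ⟨f, g, hd⟩ := aux_minor _ hr
  set p : Polynomial F := (A.submatrix f g).det with hp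
  have hp0 : p ≠ 0 := by
    intro h0
    apply hd
    have := (algebraMap (Polynomial F) (RatFunc F)).map_det (A.submatrix f g)
    rw [← hp, h0, map_zero] at this
    exact this.symm
  have hdeg : p.natDegree ≤ r * matDeg A := by
    rw [hp, det_apply]
    refine natDegree_sum_le_of_forall_le _ _ fun σ _ => ?_
    refine (natDegree_smul_le _ _).trans ?_
    refine (natDegree_prod_le _ _).trans ?_
    refine (Finset.sum_le_card_nsmul _ _ (matDeg A) fun i _ => ?_).trans (by simp)
    exact Finset.le_sup (f := fun p : Fin m × Fin n => (A p.1 p.2).natDegree)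
      (Finset.mem_univ (f (σ i), g i))
  have hsub : {α : F | (matEval A α).rank < r} ⊆ (p.roots.toFinset : Set F) := by
    intro α hα
    simp only [Finset.mem_coe, Multiset.mem_toFinset, mem_roots hp0, IsRoot.def]
    by_contra hne
    have h1 := (evalRingHom α).map_det (A.submatrix f g)
    have h2 : ((matEval A α).submatrix f g).det ≠ 0 := by
      intro h0
      exact hne (h1.trans h0)
    have h3 := rank_of_det_ne_zero h2
    have h4 := rank_submatrix_le (matEval A α) f g
    rw [h3, Fintype.card_fin] at h4
    exact absurd hα (not_lt.2 h4)
  refine ⟨(Finset.finite_toSet _).subset hsub, ?_⟩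
  calc _ ≤ (p.roots.toFinset : Set F).ncard := Set.ncard_le_ncard hsub (Finset.finite_toSet _)
    _ = p.roots.toFinset.card := Set.ncard_coe_finset _
    _ ≤ p.roots.card := Multiset.toFinset_card_le _
    _ ≤ p.natDegree := card_roots' p
    _ ≤ _ := hdeg
end
end

section
/- Let F be a field, n ≥ 1, and v ∈ F(x)^n a vector of rational functions such that denom(v) ≠ 1 (equivalently, some entry of v is not a polynomial). Let S ⊆ F be a finite nonempty subset. Then the number of vectors w ∈ S^n (entries in S) such that the inner product v·w = Σᵢ vᵢ·wᵢ lies in F[x] is at most (#S)^(n−1). -/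
open Polynomial

/-- if `v ∈ F(x)^n` has some non-polynomial entry
(equivalently `denom(v) ≠ 1`), then the number of vectors `w ∈ S^n` whose
inner product with `v` is a polynomial is at most `(#S)^(n-1)`. -/
theorem card_polynomial_innerprod_le {F : Type*} [Field F] {n : ℕ} (hn : 1 ≤ n)
    (v : Fin n → RatFunc F)
    (hv : ∃ i, (v i).denom ≠ 1)
    (S : Finset F) (hS : S.Nonempty) :
    {w : Fin n → F | (∀ i, w i ∈ S) ∧
        ∃ p : Polynomial F,
          algebraMap (Polynomial F) (RatFunc F) p
            = ∑ i, v i * algebraMap F (RatFunc F) (w i)}.ncard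
      ≤ S.card ^ (n - 1) := by
  obtain ⟨m, rfl⟩ : ∃ m, n = m + 1 := ⟨n - 1, by omega⟩
  obtain ⟨i, hi⟩ := hv
  have hcard : ((Fintype.piFinset fun _ : Fin m => S : Finset (Fin m → F)) :
      Set (Fin m → F)).ncard = S.card ^ (m + 1 - 1) := by
    rw [Set.ncard_coe_finset, Fintype.card_piFinset]
    simp
  rw [← hcard]
  refine Set.ncard_le_ncard_of_injOn (fun w => fun j => w (i.succAbove j)) ?_ ?_
    (Finset.finite_toSet _)
  · rintro w ⟨hw, -⟩
    simp only [Finset.mem_coe, Fintype.mem_piFinset]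
    exact fun j => hw _
  · rintro w ⟨-, p, hp⟩ w' ⟨-, p', hp'⟩ h
    have h' : ∀ j, w (i.succAbove j) = w' (i.succAbove j) := fun j => congrFun h j
    have hwi : w i = w' i := by
      by_contra hne
      have hc : w i - w' i ≠ 0 := sub_ne_zero.mpr hne
      rw [Fin.sum_univ_succAbove _ i] at hp hp'
      simp only [h'] at hp
      have hd : algebraMap F[X] (RatFunc F) (p - p')
          = v i * algebraMap F (RatFunc F) (w i - w' i) := by
        rw [map_sub, map_sub, hp, hp']
        ring
      have hc' : algebraMap F (RatFunc F) (w i - w' i) ≠ 0 := by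
        simpa only [ne_eq, map_eq_zero] using hc
      have hvi : v i = algebraMap F[X] (RatFunc F) ((p - p') * C (w i - w' i)⁻¹) := by
        have hC : algebraMap F[X] (RatFunc F) (C (w i - w' i)⁻¹)
            = (algebraMap F (RatFunc F) (w i - w' i))⁻¹ := by
          rw [← map_inv₀, ← Polynomial.algebraMap_eq, ← IsScalarTower.algebraMap_apply]
        rw [map_mul, hd, hC, mul_assoc, mul_inv_cancel₀ hc', mul_one]
      exact hi (by rw [hvi, RatFunc.denom_algebraMap])
    funext k
    rcases Fin.eq_self_or_eq_succAbove i k with rfl | ⟨j, rfl⟩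
    · exact hwi
    · exact h' j
end

section
/- Let F be a field, A ∈ F[x]^{m×n} with rank r (over F(x)), v ∈ F[x]^{1×n} a row vector, C₁, …, C_t ∈ F[x]^{r×m} matrices, and d₁, …, d_t ∈ F[x] polynomials such that for every i = 1, …, t: (a) rank(CᵢA) = rank(A) = r, and (b) dᵢ·v ∈ rowsp_{F[x]}(CᵢA). If gcd(d₁, …, d_t) = 1, then v ∈ rowsp_{F[x]}(A). -/
open Polynomial Matrix

noncomputable section

variable {F : Type*} [Field F]

/-- if `rank(A) = r`, each `Cᵢ·A` has rank `r`, each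
`dᵢ·v ∈ rowsp_{F[x]}(Cᵢ·A)`, and `gcd(d₁,…,d_t) = 1` (i.e. every common
divisor of the `dᵢ` is a unit), then `v ∈ rowsp_{F[x]}(A)`. -/
theorem rowmem_of_coprime_denoms {m n r t : ℕ}
    (A : Matrix (Fin m) (Fin n) (Polynomial F))
    (hrank : polyRank A = r)
    (v : Fin n → Polynomial F)
    (Cmat : Fin t → Matrix (Fin r) (Fin m) (Polynomial F))
    (d : Fin t → Polynomial F)
    (hranks : ∀ i, polyRank (Cmat i * A) = r)
    (hmem : ∀ i, ∃ p : Fin r → Polynomial F, p ᵥ* (Cmat i * A) = d i • v)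
    (hgcd : ∀ g : Polynomial F, (∀ i, g ∣ d i) → IsUnit g) :
    ∃ p : Fin m → Polynomial F, p ᵥ* A = v := by
  obtain ⟨g, hg⟩ := (IsPrincipalIdealRing.principal (Ideal.span (Set.range d))).principal
  have hgu : IsUnit g := hgcd g fun i => by
    have h : d i ∈ Ideal.span (Set.range d) := Ideal.subset_span ⟨i, rfl⟩
    rw [hg] at h
    exact Ideal.mem_span_singleton.mp h
  have h1 : (1 : Polynomial F) ∈ Ideal.span (Set.range d) := by
    rw [hg]
    exact Ideal.mem_span_singleton.mpr hgu.dvd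
  obtain ⟨c, hc⟩ := Ideal.mem_span_range_iff_exists_fun.mp h1
  choose p hp using hmem
  refine ⟨∑ i, c i • (p i ᵥ* Cmat i), ?_⟩
  rw [Matrix.sum_vecMul]
  simp only [Matrix.smul_vecMul, Matrix.vecMul_vecMul, hp, smul_smul]
  rw [← Finset.sum_smul, hc, one_smul]
end
end

section
/- Let F be a field, A ∈ F[x]^{m×n} a matrix with full row rank m (over F(x)), and v ∈ F[x]^{1×n} a row vector that does not belong to the F(x)-row space of A. Then the set of points α ∈ F for which there exists a vector w ∈ F^{1×m} with w·A(α) = v(α) is finite with cardinality at most m·max(1, deg(A)) + max(1, deg(v)). -/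
open Polynomial Matrix

noncomputable section

variable {F : Type*} [Field F]

/-- `deg v`: the maximum of the degrees of the entries of the vector `v`. -/
def vecDeg {n : ℕ} (v : Fin n → Polynomial F) : ℕ :=
  Finset.univ.sup fun j => (v j).natDegree

/-- A matrix over a field with independent rows has a nonsingular maximal minor. -/
theorem exists_minor_ne_zero {K : Type*} [Field K] {k n : ℕ} (B : Matrix (Fin k) (Fin n) K)
    (h : LinearIndependent K B.row) : ∃ f : Fin k → Fin n, (B.submatrix id f).det ≠ 0 := by
  have hr : Module.finrank K (Submodule.span K (Set.range B.col)) = k := by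
    rw [← Matrix.rank_eq_finrank_span_cols, h.rank_matrix, Fintype.card_fin]
  obtain ⟨g, hg, -, hli⟩ := Submodule.exists_fun_fin_finrank_span_eq K (Set.range B.col)
  choose f hf using hg
  refine ⟨fun i => f (Fin.cast hr.symm i), ?_⟩
  have h2 : LinearIndependent K
      (B.submatrix id (fun i => f (Fin.cast hr.symm i))).col := by
    have h3 := hli.comp (Fin.cast hr.symm) (Fin.cast_injective _)
    have h4 : (B.submatrix id (fun i => f (Fin.cast hr.symm i))).col
        = g ∘ Fin.cast hr.symm := by
      funext i
      simp only [Function.comp, ← hf]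
      rfl
    rw [h4]
    exact h3
  rw [Matrix.linearIndependent_cols_iff_isUnit, Matrix.isUnit_iff_isUnit_det] at h2
  exact h2.ne_zero

/-- if `A` has full row rank `m` and `v` is not in the
`F(x)`-row space of `A`, then the set of `α ∈ F` for which the evaluated
system `w·A(α) = v(α)` has a solution `w ∈ F^{1×m}` is finite with at most
`m·max(1, deg A) + max(1, deg v)` elements. -/
theorem eval_solvable_points_finite {m n : ℕ}
    (A : Matrix (Fin m) (Fin n) (Polynomial F))
    (hrank : polyRank A = m)
    (v : Fin n → Polynomial F)
    (hv : ¬ ∃ p : Fin m → RatFunc F,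
        p ᵥ* (A.map (algebraMap (Polynomial F) (RatFunc F)))
          = fun j => algebraMap (Polynomial F) (RatFunc F) (v j)) :
    {α : F | ∃ w : Fin m → F, w ᵥ* (matEval A α) = fun j => (v j).eval α}.Finite ∧
      {α : F | ∃ w : Fin m → F, w ᵥ* (matEval A α) = fun j => (v j).eval α}.ncard
        ≤ m * max 1 (matDeg A) + max 1 (vecDeg v) := by
  have hA : LinearIndependent (RatFunc F)
      (A.map (algebraMap (Polynomial F) (RatFunc F))).row := by
    rw [linearIndependent_iff_card_eq_finrank_span, Fintype.card_fin, Set.finrank,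
      ← Matrix.rank_eq_finrank_span_row]
    exact hrank.symm
  set B : Matrix (Fin (m + 1)) (Fin n) (Polynomial F) :=
    Matrix.of (Fin.cons v (fun i => A i)) with hB
  have hBl : LinearIndependent (RatFunc F)
      (B.map (algebraMap (Polynomial F) (RatFunc F))).row := by
    have h1 : (B.map (algebraMap (Polynomial F) (RatFunc F))).row =
        Fin.cons (fun j => algebraMap (Polynomial F) (RatFunc F) (v j))
          (A.map (algebraMap (Polynomial F) (RatFunc F))).row := by
      funext i
      refine Fin.cases ?_ (fun i => ?_) i
      · rfl
      · rfl
    rw [h1, linearIndependent_finCons]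
    refine ⟨hA, fun hmem => hv ?_⟩
    obtain ⟨p, hp⟩ := (Submodule.mem_span_range_iff_exists_fun _).1 hmem
    refine ⟨p, ?_⟩
    rw [← hp]
    funext j
    simp [Matrix.vecMul, dotProduct, Matrix.row]
  obtain ⟨f, hf⟩ := exists_minor_ne_zero _ hBl
  set d : Polynomial F := (B.submatrix id f).det with hd
  have hd0 : d ≠ 0 := by
    intro h0
    apply hf
    have := RingHom.map_det (algebraMap (Polynomial F) (RatFunc F)) (B.submatrix id f)
    rw [← hd, h0, map_zero] at this
    rw [this]
    rfl
  have hdeg : d.natDegree ≤ m * matDeg A + vecDeg v := by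
    rw [hd, ← Matrix.det_transpose, Matrix.det_apply]
    refine Polynomial.natDegree_sum_le_of_forall_le _ _ (fun σ _ => ?_)
    refine (Polynomial.natDegree_smul_le _ _).trans ?_
    refine (Polynomial.natDegree_prod_le _ _).trans ?_
    rw [Fin.sum_univ_succ, add_comm]
    refine add_le_add ?_ ?_
    · refine (Finset.sum_le_card_nsmul _ _ (matDeg A) (fun i _ => ?_)).trans (by simp)
      simp only [hB, Matrix.transpose_apply, Matrix.submatrix_apply, Matrix.of_apply, id,
        Fin.cons_succ]
      exact Finset.le_sup (f := fun p : Fin m × Fin n => (A p.1 p.2).natDegree)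
        (Finset.mem_univ (i, f (σ i.succ)))
    · simp only [hB, Matrix.transpose_apply, Matrix.submatrix_apply, Matrix.of_apply, id,
        Fin.cons_zero]
      exact Finset.le_sup (f := fun j => (v j).natDegree) (Finset.mem_univ (f (σ 0)))
  classical
  have hsub : {α : F | ∃ w : Fin m → F, w ᵥ* (matEval A α) = fun j => (v j).eval α} ⊆
      (d.roots.toFinset : Set F) := by
    rintro α ⟨w, hw⟩
    simp only [Finset.mem_coe, Multiset.mem_toFinset, Polynomial.mem_roots hd0,
      Polynomial.IsRoot.def]
    have h1 := RingHom.map_det (Polynomial.evalRingHom α) (B.submatrix id f)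
    rw [← hd, Polynomial.coe_evalRingHom] at h1
    rw [h1, ← Matrix.exists_vecMul_eq_zero_iff]
    refine ⟨Fin.cons (-1) w, fun h => ?_, ?_⟩
    · simpa using congrFun h 0
    · funext j
      have h2 := congrFun hw (f j)
      simp only [Matrix.vecMul, dotProduct, matEval, Matrix.map_apply] at h2
      simp [Matrix.vecMul, dotProduct, Fin.sum_univ_succ, hB, h2]
  refine ⟨(Finset.finite_toSet _).subset hsub, ?_⟩
  refine (Set.ncard_le_ncard hsub (Finset.finite_toSet _)).trans ?_
  rw [Set.ncard_coe_finset]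
  refine (Multiset.toFinset_card_le _).trans ((Polynomial.card_roots' d).trans (hdeg.trans ?_))
  gcongr
  · exact le_max_right _ _
  · exact le_max_right _ _
end
end

section
/- Let F be a field, A ∈ F[x]^{m×n} a matrix with full row rank m (over F(x)), and u ∈ F[x]^{1×m}, v ∈ F[x]^{1×n} row vectors over F[x] with u·A = v. Then every entry of u has degree at most m·deg(A) + deg(v). -/
open Polynomial Matrix

noncomputable section

variable {F : Type*} [Field F]

theorem exists_cols_aux {m n : ℕ}
    (A : Matrix (Fin m) (Fin n) (Polynomial F))
    (hrank : polyRank A = m) :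
    ∃ g : Fin m → Fin n, (A.submatrix id g).det ≠ 0 := by
  unfold polyRank at hrank
  set B := A.map (algebraMap (Polynomial F) (RatFunc F)) with hB
  rw [Matrix.rank_eq_finrank_span_cols] at hrank
  obtain ⟨f, hf, -, hli⟩ := Submodule.exists_fun_fin_finrank_span_eq (RatFunc F) (Set.range B.col)
  choose g hg using hf
  have hli' := hli.comp (Fin.cast hrank.symm) (Fin.cast_injective _)
  refine ⟨fun i => g (Fin.cast hrank.symm i), fun h0 => ?_⟩
  have hcol : (B.submatrix id (fun i => g (Fin.cast hrank.symm i))).col =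
      f ∘ Fin.cast hrank.symm := by
    funext i
    rw [Function.comp_apply, ← hg]
    rfl
  rw [← hcol, Matrix.linearIndependent_cols_iff_isUnit, Matrix.isUnit_iff_isUnit_det] at hli'
  apply hli'.ne_zero
  have := congrArg (algebraMap (Polynomial F) (RatFunc F)) h0
  rw [RingHom.map_det, map_zero] at this
  exact this

/-- if `A` has full row rank `m` and `u·A = v` over `F[x]`,
then every entry of `u` has degree at most `m·deg(A) + deg(v)`. -/
theorem solution_degree_bound {m n : ℕ}
    (A : Matrix (Fin m) (Fin n) (Polynomial F))
    (hrank : polyRank A = m)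
    (u : Fin m → Polynomial F) (v : Fin n → Polynomial F)
    (huv : u ᵥ* A = v) :
    ∀ i, (u i).natDegree ≤ m * matDeg A + vecDeg v := by
  intro i
  obtain ⟨g, hg⟩ := exists_cols_aux A hrank
  have hA : ∀ a b, (A a b).natDegree ≤ matDeg A := fun a b =>
    Finset.le_sup (f := fun p : Fin m × Fin n => (A p.1 p.2).natDegree) (Finset.mem_univ (a, b))
  have hv : ∀ b, (v b).natDegree ≤ vecDeg v := fun b =>
    Finset.le_sup (f := fun j => (v j).natDegree) (Finset.mem_univ b)
  have key : ((A.submatrix id g).updateRow i (fun j => v (g j))).det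
      = u i * (A.submatrix id g).det := by
    have h1 : (fun j => v (g j)) = ∑ k, u k • (A.submatrix id g) k := by
      funext j
      rw [← huv]
      simp [Matrix.vecMul, dotProduct, Finset.sum_apply]
    rw [h1, Matrix.det_updateRow_sum, smul_eq_mul]
  have hdeg : ((A.submatrix id g).updateRow i (fun j => v (g j))).det.natDegree
      ≤ m * matDeg A + vecDeg v := by
    rw [Matrix.det_apply, ]
    refine Polynomial.natDegree_sum_le_of_forall_le _ _ fun σ _ => ?_
    refine (Polynomial.natDegree_smul_le _ _).trans ?_
    refine (Polynomial.natDegree_prod_le _ _).trans ?_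
    calc _ ≤ ∑ k : Fin m, (matDeg A + if σ k = i then vecDeg v else 0) := by
          refine Finset.sum_le_sum fun k _ => ?_
          by_cases h : σ k = i
          · rw [if_pos h, h, Matrix.updateRow_self]
            exact (hv _).trans (Nat.le_add_left _ _)
          · rw [if_neg h, Matrix.updateRow_ne h]
            exact hA _ _
      _ = _ := by
          rw [Finset.sum_add_distrib, Equiv.sum_comp σ (fun k => if k = i then vecDeg v else 0)]
          simp
  by_cases hu : u i = 0
  · simp [hu]
  rw [key, Polynomial.natDegree_mul hu hg] at hdeg
  omega
end
end

section
/- Let F be a field, A ∈ F[x]^{m×n} a matrix with rank r (over F(x)), and K ∈ F[x]^{n×(n−r)} a matrix whose columns form an F[x]-basis of the right kernel {x ∈ F[x]^{n×1} : A·x = 0} of A. Then satur(A) equals the left kernel of K, i.e., satur(A) = {v ∈ F[x]^{1×n} : v·K = 0}. -/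
open Polynomial Matrix

noncomputable section

variable {F : Type*} [Field F]

/-- The `F[x]`-row space of `A`, as a set: `{p·A : p ∈ F[x]^{1×m}}`. -/
def rowSpanPoly {m n : ℕ} (A : Matrix (Fin m) (Fin n) (Polynomial F)) :
    Set (Fin n → Polynomial F) :=
  {v | ∃ p : Fin m → Polynomial F, p ᵥ* A = v}

/-- The saturation of `A`: the polynomial vectors lying in the
`F(x)`-row space of `A`. -/
def satur {m n : ℕ} (A : Matrix (Fin m) (Fin n) (Polynomial F)) :
    Set (Fin n → Polynomial F) :=
  {v | ∃ p : Fin m → RatFunc F,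
      p ᵥ* (A.map (algebraMap (Polynomial F) (RatFunc F)))
        = fun j => algebraMap (Polynomial F) (RatFunc F) (v j)}

/-- `A` is saturated when its saturation equals its `F[x]`-row space. -/
def IsSaturated {m n : ℕ} (A : Matrix (Fin m) (Fin n) (Polynomial F)) : Prop :=
  satur A = rowSpanPoly A

/-- if the columns of `K` form an `F[x]`-basis of the right
kernel of `A` (with `rank(A) = r`), then `satur(A)` is the left kernel
of `K`. -/
theorem satur_eq_leftKernel {m n r : ℕ}
    (A : Matrix (Fin m) (Fin n) (Polynomial F))
    (hrank : polyRank A = r)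
    (K : Matrix (Fin n) (Fin (n - r)) (Polynomial F))
    (hKindep : LinearIndependent (Polynomial F) fun j : Fin (n - r) => Kᵀ j)
    (hKspan : ∀ x : Fin n → Polynomial F,
        A.mulVec x = 0 ↔ ∃ c : Fin (n - r) → Polynomial F, K.mulVec c = x) :
    satur A = {v : Fin n → Polynomial F | v ᵥ* K = 0} := by
  classical
  set φ := algebraMap (Polynomial F) (RatFunc F) with hφ
  have hinj : Function.Injective φ := IsFractionRing.injective _ _
  ext v
  constructor
  · rintro ⟨p, hp⟩
    have hp' : p ᵥ* A.map φ = φ ∘ v := hp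
    show v ᵥ* K = 0
    have hAK : A * K = 0 := by
      refine Matrix.ext fun i j => ?_
      have h := (hKspan (K.mulVec (Pi.single j 1))).2 ⟨_, rfl⟩
      rw [Matrix.mulVec_mulVec] at h
      have := congrFun h i
      simpa using this
    have h1 : φ ∘ (v ᵥ* K) = (φ ∘ v) ᵥ* K.map φ := by
      funext j
      exact RingHom.map_vecMul φ K v j
    rw [← hp', Matrix.vecMul_vecMul, ← Matrix.map_mul, hAK] at h1
    funext j
    apply hinj
    have := congrFun h1 j
    simpa using this
  · intro hv
    have hv : v ᵥ* K = 0 := hv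
    have hker : ∀ w : Fin n → RatFunc F, A.map φ *ᵥ w = 0 → (φ ∘ v) ⬝ᵥ w = 0 := by
      intro w hw
      obtain ⟨d, hd⟩ := IsLocalization.exist_integer_multiples_of_finite
        (nonZeroDivisors (Polynomial F)) w
      choose x hx using hd
      have hd0 : φ d ≠ 0 := by
        intro h
        exact nonZeroDivisors.ne_zero d.2 (hinj (by simpa using h))
      have hxw : φ ∘ x = φ d • w := by
        funext i
        have := hx i
        simpa [Algebra.smul_def] using this
      have hAx : A *ᵥ x = 0 := by
        funext i
        apply hinj
        rw [RingHom.map_mulVec, hxw, Matrix.mulVec_smul, hw]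
        simp
      obtain ⟨c, hc⟩ := (hKspan x).1 hAx
      have h0 : v ⬝ᵥ x = 0 := by
        rw [← hc, Matrix.dotProduct_mulVec, hv, zero_dotProduct]
      have h2 : (φ ∘ v) ⬝ᵥ (φ ∘ x) = 0 := by
        rw [← RingHom.map_dotProduct, h0, map_zero]
      rw [hxw, dotProduct_smul, smul_eq_mul] at h2
      exact (mul_eq_zero.1 h2).resolve_left hd0
    let f := (A.map φ).mulVecLin
    let g : Module.Dual (RatFunc F) (Fin n → RatFunc F) := dotProductBilin (RatFunc F) (RatFunc F) (φ ∘ v)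
    have hg : g ∈ (LinearMap.ker f).dualAnnihilator := by
      rw [Submodule.mem_dualAnnihilator]
      intro w hw
      exact hker w hw
    rw [← LinearMap.range_dualMap_eq_dualAnnihilator_ker] at hg
    obtain ⟨q, hq⟩ := hg
    refine ⟨fun i => q (Pi.single i 1), ?_⟩
    funext j
    have h3 := LinearMap.congr_fun hq (Pi.single j 1)
    have h4 : g (Pi.single j 1) = φ (v j) := by
      show (φ ∘ v) ⬝ᵥ (Pi.single j 1) = _
      simp
    rw [h4] at h3
    rw [← h3]
    show _ = q (A.map φ *ᵥ Pi.single j 1)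
    rw [LinearMap.pi_apply_eq_sum_univ q]
    simp only [Matrix.vecMul, dotProduct, smul_eq_mul]
    refine Finset.sum_congr rfl fun i _ => ?_
    rw [mul_comm]
    congr 1
    · simp [hφ]
    · congr 1
      funext k
      simp [Pi.single_apply, eq_comm]
end
end

section
/- Let F be a field and A ∈ F[x]^{m×n} a matrix with full row rank m (over F(x)). Then A is saturated if and only if the F[x]-column space of A equals F[x]^{m×1}, i.e., if and only if there exists V ∈ F[x]^{n×m} with A·V = I_m. -/
open Polynomial Matrix

noncomputable section

variable {F : Type*} [Field F]

/-- a polynomial matrix with full row rank `m` is saturated if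
and only if its `F[x]`-column space is all of `F[x]^{m×1}`, i.e. if and only
if `A·V = I` for some polynomial matrix `V`. -/
theorem saturated_iff_colSpan_univ_of_fullRowRank {m n : ℕ}
    (A : Matrix (Fin m) (Fin n) (Polynomial F))
    (hrank : polyRank A = m) :
    (IsSaturated A ↔
        {b : Fin m → Polynomial F | ∃ q : Fin n → Polynomial F, A.mulVec q = b}
          = Set.univ) ∧
      (IsSaturated A ↔ ∃ V : Matrix (Fin n) (Fin m) (Polynomial F), A * V = 1) := by
  have hinjK : Function.Injective
      (fun p : Fin m → RatFunc F => p ᵥ* (A.map (algebraMap (Polynomial F) (RatFunc F)))) := by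
    rw [Matrix.vecMul_injective_iff, linearIndependent_iff_card_eq_finrank_span, Set.finrank,
      ← Matrix.rank_eq_finrank_span_row]
    simpa [polyRank] using hrank.symm
  have hmap : ∀ p : Fin m → Polynomial F,
      (fun i => algebraMap (Polynomial F) (RatFunc F) (p i)) ᵥ*
        (A.map (algebraMap (Polynomial F) (RatFunc F))) =
      fun j => algebraMap (Polynomial F) (RatFunc F) ((p ᵥ* A) j) := by
    intro p
    funext j
    simp [Matrix.vecMul, dotProduct, map_sum]
  have hKinj : Function.Injective (algebraMap (Polynomial F) (RatFunc F)) :=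
    IsFractionRing.injective _ _
  have hinj : Function.Injective (Matrix.vecMulLinear A) := by
    intro p q h
    have h' : p ᵥ* A = q ᵥ* A := by simpa using h
    have := @hinjK (fun i => algebraMap (Polynomial F) (RatFunc F) (p i))
      (fun i => algebraMap (Polynomial F) (RatFunc F) (q i)) (by
        simp only [hmap, h'])
    funext i
    exact hKinj (congrFun this i)
  have hsatV : IsSaturated A ↔ ∃ V : Matrix (Fin n) (Fin m) (Polynomial F), A * V = 1 := by
    constructor
    · intro hs
      let M := LinearMap.range (Matrix.vecMulLinear A)
      have hM : ∀ (r : Polynomial F) (v : Fin n → Polynomial F), r ≠ 0 → r • v ∈ M → v ∈ M := by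
        rintro r v hr ⟨p, hp⟩
        have hp' : p ᵥ* A = r • v := by simpa using hp
        have hv : v ∈ satur A := by
          refine ⟨(algebraMap (Polynomial F) (RatFunc F) r)⁻¹ •
            (fun i => algebraMap (Polynomial F) (RatFunc F) (p i)), ?_⟩
          have hr' : algebraMap (Polynomial F) (RatFunc F) r ≠ 0 := by
            simpa using hr
          rw [Matrix.smul_vecMul, hmap, hp']
          funext j
          simp only [Pi.smul_apply, smul_eq_mul, map_mul]
          rw [inv_mul_cancel_left₀ hr']
        rw [hs] at hv
        obtain ⟨p, hp⟩ := hv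
        exact ⟨p, by simpa using hp⟩
      have htf : Module.IsTorsionFree (Polynomial F) ((Fin n → Polynomial F) ⧸ M) := by
        refine Module.IsTorsionFree.mk ?_
        intro r hr x y hxy
        obtain ⟨a, rfl⟩ := M.mkQ_surjective x
        obtain ⟨b, rfl⟩ := M.mkQ_surjective y
        have h : r • M.mkQ a = r • M.mkQ b := hxy
        rw [← map_smul, ← map_smul] at h
        have h2 := (Submodule.Quotient.eq M).1 h
        rw [← smul_sub] at h2
        exact (Submodule.Quotient.eq M).2 (hM r _ hr.ne_zero h2)
      have hfree : Module.Free (Polynomial F) ((Fin n → Polynomial F) ⧸ M) :=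
        Module.free_of_finite_type_torsion_free'
      obtain ⟨s, hsec⟩ := Module.projective_lifting_property M.mkQ LinearMap.id M.mkQ_surjective
      have hmem : ∀ v, ((LinearMap.id - s.comp M.mkQ :
          (Fin n → Polynomial F) →ₗ[Polynomial F] (Fin n → Polynomial F))) v ∈ M := by
        intro v
        rw [← Submodule.Quotient.mk_eq_zero, ← Submodule.mkQ_apply]
        have := LinearMap.congr_fun hsec (M.mkQ v)
        simp only [LinearMap.comp_apply, LinearMap.id_apply] at this
        simp only [LinearMap.sub_apply, LinearMap.comp_apply, LinearMap.id_apply, map_sub, this,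
          sub_self]
      let e := LinearEquiv.ofInjective (Matrix.vecMulLinear A) hinj
      let g : (Fin n → Polynomial F) →ₗ[Polynomial F] (Fin m → Polynomial F) :=
        e.symm.toLinearMap.comp (LinearMap.codRestrict M _ hmem)
      have hg : ∀ p, g (p ᵥ* A) = p := by
        intro p
        have hz : M.mkQ (p ᵥ* A) = 0 := (Submodule.Quotient.mk_eq_zero M).2 ⟨p, by simp⟩
        apply e.injective
        change e (e.symm _) = _
        rw [LinearEquiv.apply_symm_apply]
        apply Subtype.ext
        simp only [LinearMap.codRestrict_apply, LinearMap.sub_apply, LinearMap.comp_apply,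
          LinearMap.id_apply, hz, map_zero, sub_zero]
        simp [e]
      refine ⟨LinearMap.toMatrixRight' g, ?_⟩
      apply Matrix.toLinearMapRight'.injective
      refine LinearMap.ext fun p => ?_
      rw [Matrix.toLinearMapRight'_mul_apply, Matrix.toLinearMapRight'_one]
      have : Matrix.toLinearMapRight' (LinearMap.toMatrixRight' g) = g :=
        Matrix.toLinearMapRight'.apply_symm_apply g
      rw [this, Matrix.toLinearMapRight'_apply, hg, LinearMap.id_apply]
    · rintro ⟨V, hV⟩
      apply Set.Subset.antisymm
      · rintro v ⟨p, hp⟩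
        have hV' : A.map (algebraMap (Polynomial F) (RatFunc F)) *
            V.map (algebraMap (Polynomial F) (RatFunc F)) = 1 := by
          rw [← Matrix.map_mul, hV, Matrix.map_one _ (map_zero _) (map_one _)]
        have h1 : p = fun i => algebraMap (Polynomial F) (RatFunc F) ((v ᵥ* V) i) := by
          have := congrArg (fun w => w ᵥ* V.map (algebraMap (Polynomial F) (RatFunc F))) hp
          simp only [Matrix.vecMul_vecMul, hV', Matrix.vecMul_one] at this
          rw [this]
          funext j
          simp [Matrix.vecMul, dotProduct, map_sum]
        refine ⟨v ᵥ* V, ?_⟩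
        rw [h1, hmap] at hp
        funext j
        exact hKinj (congrFun hp j)
      · rintro v ⟨p, rfl⟩
        exact ⟨_, hmap p⟩
  refine ⟨hsatV.trans ?_, hsatV⟩
  constructor
  · rintro ⟨V, hV⟩
    refine Set.eq_univ_of_forall fun b => ⟨V *ᵥ b, ?_⟩
    rw [Matrix.mulVec_mulVec, hV, Matrix.one_mulVec]
  · intro h
    have h' : ∀ b : Fin m → Polynomial F, ∃ q : Fin n → Polynomial F, A *ᵥ q = b := fun b =>
      (Set.eq_univ_iff_forall.1 h) b
    choose q hq using h'
    refine ⟨Matrix.of fun i j => q (Pi.single j 1) i, ?_⟩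
    ext1 i j
    have := congrFun (hq (Pi.single j 1)) i
    rw [Matrix.one_apply, Matrix.mul_apply]
    rw [Pi.single_apply] at this
    exact this
end
end

section
/- Let F be a field, K ∈ F[x]^{n×ℓ}, and B ∈ F[x]^{r×n} a matrix whose rows form an F[x]-basis of the left kernel {p ∈ F[x]^{1×n} : p·K = 0} of K. Then the F[x]-column space of B equals F[x]^{r×1}; equivalently, there exists V ∈ F[x]^{n×r} with B·V = I_r. -/
open Polynomial Matrix

noncomputable section

/-- if the rows of `B` form an `F[x]`-basis of the left kernel
of `K`, then the `F[x]`-column space of `B` is all of `F[x]^{r×1}`;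
equivalently there is `V` with `B·V = I`. -/
theorem kernel_basis_colSpan_univ {F : Type*} [Field F] {n ℓ r : ℕ}
    (K : Matrix (Fin n) (Fin ℓ) (Polynomial F))
    (B : Matrix (Fin r) (Fin n) (Polynomial F))
    (hBindep : LinearIndependent (Polynomial F) fun i : Fin r => B i)
    (hBspan : ∀ p : Fin n → Polynomial F,
        p ᵥ* K = 0 ↔ ∃ q : Fin r → Polynomial F, q ᵥ* B = p) :
    ({b : Fin r → Polynomial F | ∃ q : Fin n → Polynomial F, B.mulVec q = b}
        = Set.univ) ∧
      ∃ V : Matrix (Fin n) (Fin r) (Polynomial F), B * V = 1 := by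
  have hV : ∃ V : Matrix (Fin n) (Fin r) (Polynomial F), B * V = 1 := by
    obtain ⟨s, hs⟩ := K.vecMulLinear.rangeRestrict.exists_rightInverse_of_surjective
      K.vecMulLinear.range_rangeRestrict
    set g : (Fin n → Polynomial F) →ₗ[Polynomial F] (Fin n → Polynomial F) :=
      LinearMap.id - s ∘ₗ K.vecMulLinear.rangeRestrict with hg
    have hgker : ∀ p, g p ᵥ* K = 0 := by
      intro p
      have h1 := LinearMap.congr_fun hs (K.vecMulLinear.rangeRestrict p)
      have h2 := congrArg Subtype.val h1
      simp only [LinearMap.comp_apply, LinearMap.id_apply, LinearMap.codRestrict_apply,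
        LinearMap.rangeRestrict, Matrix.vecMulLinear_apply] at h2
      simp only [hg, LinearMap.sub_apply, LinearMap.id_apply, LinearMap.comp_apply,
        Matrix.sub_vecMul, LinearMap.rangeRestrict]
      rw [h2, sub_self]
    have hgfix : ∀ p, p ᵥ* K = 0 → g p = p := by
      intro p hp
      have : K.vecMulLinear.rangeRestrict p = 0 := Subtype.ext hp
      simp [hg, this]
    have hq : ∀ p, ∃ q : Fin r → Polynomial F, q ᵥ* B = g p :=
      fun p => (hBspan _).1 (hgker p)
    choose q hq using hq
    let V : Matrix (Fin n) (Fin r) (Polynomial F) := Matrix.of fun j => q (Pi.single j 1)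
    have hVB : (V * B).vecMulLinear = g := by
      refine LinearMap.pi_ext' fun j => LinearMap.ext_ring ?_
      have h := hq (Pi.single j 1)
      simp only [LinearMap.comp_apply, LinearMap.coe_single, Matrix.vecMulLinear_apply]
      rw [← h, Matrix.single_one_vecMul]
      rfl
    have hinj : Function.Injective B.vecMul := Matrix.vecMul_injective_iff.2 hBindep
    refine ⟨V, ?_⟩
    refine funext fun i => ?_
    apply hinj
    have h0 : B i ᵥ* K = 0 := (hBspan _).2 ⟨Pi.single i 1, by rw [Matrix.single_one_vecMul]; rfl⟩
    have h1 := LinearMap.congr_fun hVB (B i)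
    rw [hgfix _ h0, Matrix.vecMulLinear_apply, ← Matrix.vecMul_vecMul] at h1
    have h2 : (1 : Matrix (Fin r) (Fin r) (Polynomial F)) i ᵥ* B = B i := by
      change ((1 : Matrix (Fin r) (Fin r) (Polynomial F)) * B) i = B i
      rw [Matrix.one_mul]
    exact h1.trans h2.symm
  refine ⟨?_, hV⟩
  obtain ⟨V, hV⟩ := hV
  refine Set.eq_univ_of_forall fun b => ⟨V *ᵥ b, ?_⟩
  rw [Matrix.mulVec_mulVec, hV, Matrix.one_mulVec]
end
end

section
/- Let F be a field, A ∈ F[x]^{m×n}, and B ∈ F[x]^{ℓ×n}. Then B is a saturation basis of A (i.e., the rows of B form an F[x]-basis of satur(A)) if and only if the following three conditions hold: (i) rowsp_{F[x]}(A) ⊆ rowsp_{F[x]}(B); (ii) rank(B) = ℓ and rank(A) ≥ ℓ; (iii) B is saturated. -/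
open Polynomial Matrix

noncomputable section

variable {F : Type*} [Field F]

/-- The `F(x)`-row space of `A`, as a subspace. -/
def fracRow {m n : ℕ} (A : Matrix (Fin m) (Fin n) (Polynomial F)) :
    Submodule (RatFunc F) (Fin n → RatFunc F) :=
  Submodule.span (RatFunc F)
    (Set.range (A.map (algebraMap (Polynomial F) (RatFunc F))).row)

theorem mem_satur_iff {m n : ℕ} (A : Matrix (Fin m) (Fin n) (Polynomial F))
    (v : Fin n → Polynomial F) :
    v ∈ satur A ↔ (fun j => algebraMap (Polynomial F) (RatFunc F) (v j)) ∈ fracRow A := by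
  unfold fracRow satur
  rw [← range_vecMulLinear, LinearMap.mem_range]
  rfl

theorem row_mem_rowSpan {m n : ℕ} (A : Matrix (Fin m) (Fin n) (Polynomial F)) (i : Fin m) :
    A i ∈ rowSpanPoly A :=
  ⟨Pi.single i 1, by simp; rfl⟩

theorem rowSpan_subset_satur {m n : ℕ} (A : Matrix (Fin m) (Fin n) (Polynomial F)) :
    rowSpanPoly A ⊆ satur A := by
  rintro v ⟨p, rfl⟩
  refine ⟨fun i => algebraMap (Polynomial F) (RatFunc F) (p i), ?_⟩
  funext j
  simp [Matrix.vecMul, dotProduct, map_sum]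

theorem fracRow_le {m k n : ℕ} (A : Matrix (Fin m) (Fin n) (Polynomial F))
    (B : Matrix (Fin k) (Fin n) (Polynomial F)) (h : rowSpanPoly A ⊆ satur B) :
    fracRow A ≤ fracRow B := by
  refine Submodule.span_le.2 ?_
  rintro _ ⟨i, rfl⟩
  exact (mem_satur_iff B _).1 (h (row_mem_rowSpan A i))

theorem polyRank_eq {m n : ℕ} (A : Matrix (Fin m) (Fin n) (Polynomial F)) :
    polyRank A = Module.finrank (RatFunc F) (fracRow A) :=
  Matrix.rank_eq_finrank_span_row _

theorem linInd_iff {k n : ℕ} (B : Matrix (Fin k) (Fin n) (Polynomial F)) :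
    LinearIndependent (Polynomial F) (fun i : Fin k => B i) ↔ polyRank B = k := by
  have h1 : LinearIndependent (Polynomial F) (fun i : Fin k => B i) ↔
      LinearIndependent (Polynomial F)
        (B.map (algebraMap (Polynomial F) (RatFunc F))).row := by
    let f : (Fin n → Polynomial F) →ₗ[Polynomial F] (Fin n → RatFunc F) :=
      (Algebra.linearMap (Polynomial F) (RatFunc F)).compLeft (Fin n)
    have hf : LinearMap.ker f = ⊥ := by
      rw [LinearMap.ker_eq_bot]
      intro v w h
      funext j
      exact IsFractionRing.injective (Polynomial F) (RatFunc F) (congrFun h j)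
    exact (f.linearIndependent_iff hf (v := fun i : Fin k => B i)).symm
  rw [h1, LinearIndependent.iff_fractionRing (Polynomial F) (RatFunc F),
    linearIndependent_iff_card_eq_finrank_span, polyRank_eq, Fintype.card_fin, eq_comm]
  rfl

/-- `B` is a saturation basis of `A` (its rows form an
`F[x]`-basis of `satur(A)`) if and only if (i) `rowsp(A) ⊆ rowsp(B)`,
(ii) `rank(B) = ℓ` and `rank(A) ≥ ℓ`, and (iii) `B` is saturated. -/
theorem saturation_basis_iff {m n ℓ : ℕ}
    (A : Matrix (Fin m) (Fin n) (Polynomial F))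
    (B : Matrix (Fin ℓ) (Fin n) (Polynomial F)) :
    (LinearIndependent (Polynomial F) (fun i : Fin ℓ => B i) ∧
        ∀ v : Fin n → Polynomial F,
          v ∈ satur A ↔ ∃ p : Fin ℓ → Polynomial F, p ᵥ* B = v) ↔
      (rowSpanPoly A ⊆ rowSpanPoly B ∧
        (polyRank B = ℓ ∧ ℓ ≤ polyRank A) ∧
        IsSaturated B) := by
  rw [linInd_iff]
  constructor
  · rintro ⟨hB, h⟩
    have hs : satur A = rowSpanPoly B := Set.ext h
    have hA : rowSpanPoly A ⊆ rowSpanPoly B := hs ▸ rowSpan_subset_satur A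
    have h1 : fracRow A ≤ fracRow B := fracRow_le A B (hA.trans (rowSpan_subset_satur B))
    have h2 : fracRow B ≤ fracRow A := fracRow_le B A hs.ge
    have he : fracRow A = fracRow B := le_antisymm h1 h2
    refine ⟨hA, ⟨hB, ?_⟩, ?_⟩
    · rw [polyRank_eq, he, ← polyRank_eq, hB]
    · unfold IsSaturated
      rw [← hs]
      ext v
      rw [mem_satur_iff, mem_satur_iff, he]
  · rintro ⟨hA, ⟨hB, hr⟩, hs⟩
    have h1 : fracRow A ≤ fracRow B := fracRow_le A B (hA.trans (rowSpan_subset_satur B))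
    have he : fracRow A = fracRow B := by
      apply Submodule.eq_of_le_of_finrank_le h1
      rw [← polyRank_eq, ← polyRank_eq, hB]
      exact hr
    refine ⟨hB, fun v => ?_⟩
    rw [mem_satur_iff, he, ← mem_satur_iff, show satur B = rowSpanPoly B from hs]
    rfl
end
end

section
/- Let F be a field, A ∈ F[x]^{m×n}, and B ∈ F[x]^{ℓ×m}. Then B is a left kernel basis of A (i.e., the rows of B form an F[x]-basis of {p ∈ F[x]^{1×m} : p·A = 0}) if and only if the following conditions hold: (i) rank(B) = ℓ and rank(A) ≥ m − ℓ; (ii) B·A = 0; (iii) B is saturated. -/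
open Polynomial Matrix

noncomputable section

variable {F : Type*} [Field F]

theorem kb_map_vecMul {k l : ℕ} (q : Fin k → Polynomial F)
    (M : Matrix (Fin k) (Fin l) (Polynomial F)) :
    (fun i => algebraMap (Polynomial F) (RatFunc F) (q i)) ᵥ*
      (M.map (algebraMap (Polynomial F) (RatFunc F)))
      = fun j => algebraMap (Polynomial F) (RatFunc F) ((q ᵥ* M) j) := by
  funext j
  simp [Matrix.vecMul, dotProduct, map_sum]

theorem kb_clear {k : ℕ} (p : Fin k → RatFunc F) :
    ∃ (d : Polynomial F) (q : Fin k → Polynomial F), d ≠ 0 ∧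
      (fun i => algebraMap (Polynomial F) (RatFunc F) (q i))
        = algebraMap (Polynomial F) (RatFunc F) d • p := by
  obtain ⟨b, hb⟩ := IsLocalization.exist_integer_multiples_of_finite
    (nonZeroDivisors (Polynomial F)) p
  choose q hq using hb
  refine ⟨b, q, nonZeroDivisors.ne_zero b.2, ?_⟩
  funext i
  rw [hq i]
  simp [Algebra.smul_def]

theorem kb_inj {k : ℕ} (v : Fin k → Polynomial F)
    (h : (fun i => algebraMap (Polynomial F) (RatFunc F) (v i)) = 0) : v = 0 := by
  funext i
  have := congrFun h i
  simpa using this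

theorem kb_rank_range {k l : ℕ} (M : Matrix (Fin k) (Fin l) (RatFunc F)) :
    Module.finrank (RatFunc F) (LinearMap.range M.vecMulLinear) = M.rank := by
  rw [← Matrix.rank_transpose M, Matrix.rank]
  have h : M.vecMulLinear = Mᵀ.mulVecLin := by
    apply LinearMap.ext
    intro x
    simp [Matrix.mulVec_transpose]
  rw [h]

theorem kb_rank_ker {k l : ℕ} (M : Matrix (Fin k) (Fin l) (RatFunc F)) :
    M.rank + Module.finrank (RatFunc F) (LinearMap.ker M.vecMulLinear) = k := by
  rw [← kb_rank_range, LinearMap.finrank_range_add_finrank_ker]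
  simp

theorem kb_indep_iff {k l : ℕ} (B : Matrix (Fin k) (Fin l) (Polynomial F)) :
    LinearIndependent (Polynomial F) (fun i : Fin k => B i) ↔ polyRank B = k := by
  have h1 : LinearIndependent (Polynomial F) (fun i : Fin k => B i) ↔
      ∀ q : Fin k → Polynomial F, q ᵥ* B = 0 → q = 0 := by
    have := Matrix.vecMul_injective_iff (M := B)
    change LinearIndependent (Polynomial F) B.row ↔ _
    rw [← this]
    exact injective_iff_map_eq_zero B.vecMulLinear
  have h3 := kb_rank_ker (B.map (algebraMap (Polynomial F) (RatFunc F)))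
  rw [h1, polyRank]
  constructor
  · intro h
    have : LinearMap.ker (B.map (algebraMap (Polynomial F) (RatFunc F))).vecMulLinear = ⊥ := by
      rw [LinearMap.ker_eq_bot']
      intro p hp
      obtain ⟨d, q, hd, hq⟩ := kb_clear p
      have hp' : p ᵥ* (B.map (algebraMap (Polynomial F) (RatFunc F))) = 0 := hp
      have h0 : q ᵥ* B = 0 := by
        apply kb_inj
        rw [← kb_map_vecMul, hq, Matrix.smul_vecMul, hp', smul_zero]
      have hq0 := h q h0
      subst hq0
      have hz : algebraMap (Polynomial F) (RatFunc F) d • p = 0 := by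
        rw [← hq]; funext i; simp
      refine (smul_eq_zero.mp hz).resolve_left ?_
      simpa using hd
    rw [this] at h3
    simpa using h3
  · intro h q hq
    have hb : LinearMap.ker (B.map (algebraMap (Polynomial F) (RatFunc F))).vecMulLinear = ⊥ := by
      apply Submodule.finrank_eq_zero.mp
      omega
    apply kb_inj
    apply LinearMap.ker_eq_bot'.mp hb
    rw [Matrix.vecMulLinear_apply, kb_map_vecMul, hq]
    funext i; simp

/-- `B` is a left kernel basis of `A` (its rows form an
`F[x]`-basis of `{p : p·A = 0}`) if and only if (i) `rank(B) = ℓ` and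
`rank(A) ≥ m − ℓ`, (ii) `B·A = 0`, and (iii) `B` is saturated. -/
theorem kernel_basis_iff {m n ℓ : ℕ}
    (A : Matrix (Fin m) (Fin n) (Polynomial F))
    (B : Matrix (Fin ℓ) (Fin m) (Polynomial F)) :
    (LinearIndependent (Polynomial F) (fun i : Fin ℓ => B i) ∧
        ∀ p : Fin m → Polynomial F,
          p ᵥ* A = 0 ↔ ∃ q : Fin ℓ → Polynomial F, q ᵥ* B = p) ↔
      ((polyRank B = ℓ ∧ m - ℓ ≤ polyRank A) ∧
        B * A = 0 ∧
        IsSaturated B) := by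
  rw [kb_indep_iff]
  have hA := kb_rank_ker (A.map (algebraMap (Polynomial F) (RatFunc F)))
  have hB := kb_rank_range (B.map (algebraMap (Polynomial F) (RatFunc F)))
  have hBA : B * A = 0 → (B.map (algebraMap (Polynomial F) (RatFunc F))) *
      (A.map (algebraMap (Polynomial F) (RatFunc F))) = 0 := by
    intro h
    rw [← Matrix.map_mul, h]
    ext i j; simp
  constructor
  · rintro ⟨hr, hk⟩
    have h0 : B * A = 0 := by
      ext1 i j
      have := (hk (B i)).mpr ⟨Pi.single i 1, by simp [Matrix.row]⟩
      exact congrFun this j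
    refine ⟨⟨hr, ?_⟩, h0, ?_⟩
    · have hle : LinearMap.ker (A.map (algebraMap (Polynomial F) (RatFunc F))).vecMulLinear ≤
          LinearMap.range (B.map (algebraMap (Polynomial F) (RatFunc F))).vecMulLinear := by
        intro p hp
        have hp' : p ᵥ* (A.map (algebraMap (Polynomial F) (RatFunc F))) = 0 := hp
        obtain ⟨d, q, hd, hq⟩ := kb_clear p
        have hqA : q ᵥ* A = 0 := by
          apply kb_inj
          rw [← kb_map_vecMul, hq, Matrix.smul_vecMul, hp', smul_zero]
        obtain ⟨r, rfl⟩ := (hk q).mp hqA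
        rw [← kb_map_vecMul] at hq
        have hd' : algebraMap (Polynomial F) (RatFunc F) d ≠ 0 := by simpa using hd
        have := (Submodule.smul_mem_iff (LinearMap.range
          (B.map (algebraMap (Polynomial F) (RatFunc F))).vecMulLinear) hd' (x := p))
        rw [← this, ← hq]
        exact ⟨_, rfl⟩
      have := Submodule.finrank_mono hle
      unfold polyRank at *
      omega
    · ext v
      constructor
      · rintro ⟨p, hp⟩
        apply (hk v).mp
        apply kb_inj
        rw [← kb_map_vecMul, ← hp, Matrix.vecMul_vecMul, hBA h0, Matrix.vecMul_zero]
      · rintro ⟨p, rfl⟩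
        exact ⟨_, kb_map_vecMul p B⟩
  · rintro ⟨⟨hr, hrA⟩, h0, hs⟩
    refine ⟨hr, fun p => ⟨fun hp => ?_, ?_⟩⟩
    · have hle : LinearMap.range (B.map (algebraMap (Polynomial F) (RatFunc F))).vecMulLinear ≤
          LinearMap.ker (A.map (algebraMap (Polynomial F) (RatFunc F))).vecMulLinear := by
        rintro _ ⟨p, rfl⟩
        rw [LinearMap.mem_ker, Matrix.vecMulLinear_apply, Matrix.vecMulLinear_apply, Matrix.vecMul_vecMul, hBA h0, Matrix.vecMul_zero]
      have heq := Submodule.eq_of_le_of_finrank_le hle (by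
        unfold polyRank at *
        omega)
      have hmem : (fun i => algebraMap (Polynomial F) (RatFunc F) (p i)) ∈
          LinearMap.ker (A.map (algebraMap (Polynomial F) (RatFunc F))).vecMulLinear := by
        rw [LinearMap.mem_ker, Matrix.vecMulLinear_apply, kb_map_vecMul, hp]
        funext i; simp
      rw [← heq] at hmem
      obtain ⟨r, hr'⟩ := hmem
      have : p ∈ satur B := ⟨r, hr'⟩
      rw [hs] at this
      exact this
    · rintro ⟨q, rfl⟩
      rw [Matrix.vecMul_vecMul, h0, Matrix.vecMul_zero]
end
end
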